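/- arXiv:1705.10947 — 4 statements merged into one kernel-verified Lean document; each statement's English description precedes it below -/
import Mathlib

section
/- Let a and b be positive integers and let U₁,…,U_m and V₁,…,V_m be subspaces of a vector space over a field such that (i) dim Uᵢ ≤ a and dim Vᵢ ≤ b for all i, (ii) Uᵢ ∩ Vᵢ = {0} for all i, and (iii) Uᵢ ∩ V_j ≠ {0} whenever 1 ≤ i < j ≤ m. Then m ≤ C(a+b, a). -/
/-!
The proof is Lovász's exterior algebra argument, preceded by a generic projection to a space of
dimension `a + b`.

* `exists_generic_map`: over the field `K` of rational functions in the entries of a generic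
  matrix, the generic `F`-linear map `M → K ^ t` sends every `F`-independent family of at most
  `card t` vectors to a `K`-independent family. Some maximal minor of the image family is a
  polynomial that specializes to `1`, hence is nonzero. Passing to `K` makes this work for finite
  `F` as well. Conversely a linearly dependent family always has a dependent image.
* After projecting bases of `U i` and `V i` to `K ^ (a + b)` and completing them to a basis
  (`exists_linearIndependent_extension`), one obtains `u i : Fin a → K ^ (a + b)` and
  `v i : Fin b → K ^ (a + b)` such that `u i, v j` are jointly independent for `i = j` and
  dependent for `i < j`.
* `card_le_choose_of_skew`: the wedge products `⋀ u i` and the functionals `ω ↦ ω ∧ ⋀ v j` on the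
  `a`-th exterior power form a triangular system with nonzero diagonal, so the `⋀ u i` are
  independent in a space of dimension `(a + b).choose a`.
-/

/-- A family paired with functionals in a triangular way with nonzero diagonal is linearly
independent. -/
lemma linearIndependent_of_triangular {K E : Type*} [Field K] [AddCommGroup E] [Module K E]
    {m : ℕ} (x : Fin m → E) (f : Fin m → E →ₗ[K] K)
    (hdiag : ∀ i, f i (x i) ≠ 0) (hlt : ∀ i j, i < j → f j (x i) = 0) :
    LinearIndependent K x := by
  rw [Fintype.linearIndependent_iff]
  intro c hc j
  -- Induction from the largest index downwards: `f j` kills all terms below `j`, and the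
  -- coefficients above `j` vanish already.
  induction j using WellFoundedGT.induction with
  | ind j ih =>
    have h := congrArg (f j) hc
    rw [map_sum, Finset.sum_eq_single j, map_smul, map_zero, smul_eq_mul] at h
    · exact (mul_eq_zero.mp h).resolve_right (hdiag j)
    · intro i _ hij
      rcases lt_or_gt_of_ne hij with h' | h'
      · simp [hlt i j h']
      · simp [ih i h']
    · simp

lemma sumElim_update {α β γ : Type*} [DecidableEq α] [DecidableEq (α ⊕ β)]
    (w : α → γ) (v : β → γ) (i : α) (z : γ) :
    Sum.elim (Function.update w i z) v = Function.update (Sum.elim w v) (Sum.inl i) z := by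
  ext (k | k) <;> simp [Function.update_apply]

/-- The alternating map `w ↦ det (w, v)` obtained from the determinant by fixing the last
`b` rows; it encodes `w ↦ w₁ ∧ ⋯ ∧ wₐ ∧ v₁ ∧ ⋯ ∧ v_b`. -/
noncomputable def detWith {K : Type*} [Field K] {a b : ℕ}
    (v : Fin b → (Fin a ⊕ Fin b → K)) : (Fin a ⊕ Fin b → K) [⋀^Fin a]→ₗ[K] K where
  toFun w := Matrix.detRowAlternating (Sum.elim w v)
  map_update_add' w i x y := by
    rename_i inst
    obtain rfl : inst = instDecidableEqFin a := Subsingleton.elim _ _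
    rw [sumElim_update, sumElim_update, sumElim_update]
    exact (Matrix.detRowAlternating (R := K)).map_update_add _ _ _ _
  map_update_smul' w i c x := by
    rename_i inst
    obtain rfl : inst = instDecidableEqFin a := Subsingleton.elim _ _
    rw [sumElim_update, sumElim_update]
    exact (Matrix.detRowAlternating (R := K)).map_update_smul _ _ _ _
  map_eq_zero_of_eq' w i j h hij :=
    (Matrix.detRowAlternating (R := K)).map_eq_zero_of_eq (Sum.elim w v)
      (i := Sum.inl i) (j := Sum.inl j) (by simpa using h) (by simpa using hij)

lemma detWith_ne_zero_iff {K : Type*} [Field K] {a b : ℕ}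
    (w : Fin a → (Fin a ⊕ Fin b → K)) (v : Fin b → (Fin a ⊕ Fin b → K)) :
    detWith v w ≠ 0 ↔ LinearIndependent K (Sum.elim w v) := by
  change Matrix.det (Matrix.of (Sum.elim w v)) ≠ 0 ↔ _
  rw [← isUnit_iff_ne_zero, ← Matrix.isUnit_iff_isUnit_det,
    ← Matrix.linearIndependent_rows_iff_isUnit]
  rfl

/-- The skew inequality for families of exactly `a` and `b` vectors in a space of dimension
`a + b`. -/
lemma card_le_choose_of_skew {K : Type*} [Field K] {a b m : ℕ}
    (u : Fin m → Fin a → (Fin a ⊕ Fin b → K)) (v : Fin m → Fin b → (Fin a ⊕ Fin b → K))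
    (hdiag : ∀ i, LinearIndependent K (Sum.elim (u i) (v i)))
    (hlt : ∀ i j, i < j → ¬ LinearIndependent K (Sum.elim (u i) (v j))) :
    m ≤ (a + b).choose a := by
  have h := linearIndependent_of_triangular
    (fun i => exteriorPower.ιMulti K a (u i))
    (fun j => exteriorPower.alternatingMapLinearEquiv (detWith (v j)))
    (fun i => by
      rw [exteriorPower.alternatingMapLinearEquiv_apply_ιMulti]
      exact (detWith_ne_zero_iff _ _).mpr (hdiag i))
    (fun i j hij => by
      rw [exteriorPower.alternatingMapLinearEquiv_apply_ιMulti]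
      by_contra h
      exact hlt i j hij ((detWith_ne_zero_iff _ _).mp h))
  have := h.fintype_card_le_finrank
  simpa [exteriorPower.finrank_eq] using this

universe uF uM

/-- The generic linear map preserves the independence of all small enough families, also after
extending scalars to the field `K` of rational functions in the matrix entries. -/
lemma exists_generic_map {F : Type uF} {M : Type uM} [Field F] [AddCommGroup M] [Module F M]
    (t : Type) [Finite t] :
    ∃ (K : Type (max uF uM)) (_ : Field K) (_ : Algebra F K) (φ : M →ₗ[F] (t → K)),
      ∀ (s : Type) [Finite s] (e : s ↪ t) (w : s → M), LinearIndependent F w →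
        LinearIndependent K (fun l => φ (w l)) := by
  classical
  let B := Module.Basis.ofVectorSpace F M
  let R := MvPolynomial (t × Module.Basis.ofVectorSpaceIndex F M) F
  -- `P` is multiplication by the generic matrix `X`.
  let P : M →ₗ[F] (t → R) := B.constr F (fun k r => MvPolynomial.X (r, k))
  let ι : R →ₐ[F] FractionRing R := IsScalarTower.toAlgHom F R (FractionRing R)
  refine ⟨FractionRing R, inferInstance, inferInstance,
    (ι.toLinearMap.compLeft t) ∘ₗ P, ?_⟩
  intro s _ e w hw
  have := Fintype.ofFinite s
  -- `g` sends `w` to the standard basis; it gives the specialization with minor equal to `1`.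
  obtain ⟨g, hg⟩ := LinearMap.exists_leftInverse_of_injective (Finsupp.linearCombination F w)
    (LinearMap.ker_eq_bot.mpr hw)
  have hgw : ∀ l, g (w l) = Finsupp.single l 1 := by
    intro l
    have := LinearMap.congr_fun hg (Finsupp.single l 1)
    simpa using this
  let ev : R →ₐ[F] F :=
    MvPolynomial.aeval (fun p => Function.extend e (fun r => g (B p.2) r) 0 p.1)
  have hev : ∀ (x : M) (r : s), ev (P x (e r)) = g x r := by
    intro x r
    have : ev.toLinearMap ∘ₗ LinearMap.proj (e r) ∘ₗ P = Finsupp.lapply r ∘ₗ g := by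
      refine B.ext fun k => ?_
      have h : ev (MvPolynomial.X (e r, k)) = g (B k) r :=
        (MvPolynomial.aeval_X _ _).trans (e.injective.extend_apply _ _ _)
      simpa [P, Module.Basis.constr_basis] using h
    exact LinearMap.congr_fun this x
  let A : Matrix s s R := Matrix.of fun l r => P (w l) (e r)
  have hA : A.det ≠ 0 := by
    intro h0
    have h1 : (ev.toRingHom.mapMatrix A) = 1 := by
      ext l r
      change ev (P (w l) (e r)) = _
      rw [hev, hgw, Matrix.one_apply, Finsupp.single_apply]
    have h2 := RingHom.map_det ev.toRingHom A
    rw [h1, h0] at h2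
    simp at h2
  have hA' : (ι.toRingHom.mapMatrix A).det ≠ 0 := by
    rw [← RingHom.map_det]
    intro h
    exact hA (IsFractionRing.injective R (FractionRing R) (by simpa [ι] using h))
  have hrows := Matrix.linearIndependent_rows_of_det_ne_zero hA'
  exact LinearIndependent.of_comp (LinearMap.funLeft (FractionRing R) (FractionRing R) e) hrows

/-- An independent family indexed by a part of `t` extends to an independent family indexed by
all of `t` when the dimension is `card t`. -/
lemma exists_linearIndependent_extension {K : Type*} [Field K] {s t : Type} [Finite s]
    [Fintype t] (e : s ↪ t) (w : s → (t → K)) (hw : LinearIndependent K w) :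
    ∃ w' : t → (t → K), LinearIndependent K w' ∧ ∀ l, w' (e l) = w l := by
  classical
  have := Fintype.ofFinite s
  have hr := hw.linearIndepOn_id
  let B := Module.Basis.extend hr
  have : Fintype (hr.extend (Set.subset_univ _)) := FiniteDimensional.fintypeBasisIndex B
  have hcard : Fintype.card t = (hr.extend (Set.subset_univ _)).toFinset.card := by
    rw [Set.toFinset_card, ← Module.finrank_eq_card_basis B, Module.finrank_fintype_fun_eq_card]
  obtain ⟨g, hg⟩ := Finset.exists_equiv_extend_of_card_eq hcard
    (s := Finset.univ.map e) (f := Function.extend e w 0)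
    (by
      intro x hx
      simp only [Finset.mem_image, Finset.mem_map, Finset.mem_univ, true_and] at hx
      obtain ⟨_, ⟨l, rfl⟩, rfl⟩ := hx
      rw [e.injective.extend_apply, Set.mem_toFinset]
      exact hr.subset_extend _ ⟨l, rfl⟩)
    (by
      intro x hx y hy hxy
      simp only [Finset.coe_map, Finset.coe_univ, Set.image_univ, Set.mem_range] at hx hy
      obtain ⟨l, rfl⟩ := hx
      obtain ⟨k, rfl⟩ := hy
      rw [e.injective.extend_apply, e.injective.extend_apply] at hxy
      rw [hw.injective hxy])
  refine ⟨fun i => (g i : t → K), ?_, fun l => ?_⟩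
  · have hB := B.linearIndependent
    have := hB.comp (fun i => (⟨g i, Set.mem_toFinset.mp (g i).2⟩ :
      hr.extend (Set.subset_univ _))) (by
        intro i j hij
        exact g.injective (Subtype.ext (Subtype.mk.inj hij)))
    have heq : (fun i => (g i : t → K)) = B ∘ fun i => (⟨g i, Set.mem_toFinset.mp (g i).2⟩ :
        hr.extend (Set.subset_univ _)) := by
      ext1 i
      simp [B]
    rw [heq]
    exact this
  · change (g (e l) : t → K) = w l
    rw [hg (e l) (by simp), e.injective.extend_apply]

/-- Skew version of Lovász's theorem (Bollobás-type inequality for subspaces). -/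
theorem lovasz_skew {F : Type*} [Field F] {M : Type*} [AddCommGroup M] [Module F M]
    (a b m : ℕ) (ha : 0 < a) (hb : 0 < b)
    (U V : Fin m → Submodule F M)
    (hUfd : ∀ i, FiniteDimensional F (U i))
    (hVfd : ∀ i, FiniteDimensional F (V i))
    (hdimU : ∀ i, Module.finrank F (U i) ≤ a)
    (hdimV : ∀ i, Module.finrank F (V i) ≤ b)
    (hdisj : ∀ i, U i ⊓ V i = ⊥)
    (hskew : ∀ i j : Fin m, i < j → U i ⊓ V j ≠ ⊥) :
    m ≤ (a + b).choose a := by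
  let x : ∀ i, Fin (Module.finrank F (U i)) → M := fun i l => Module.finBasis F (U i) l
  let y : ∀ i, Fin (Module.finrank F (V i)) → M := fun i l => Module.finBasis F (V i) l
  have hx : ∀ i, LinearIndependent F (x i) := fun i =>
    (Module.finBasis F (U i)).linearIndependent.map' (U i).subtype (Submodule.ker_subtype _)
  have hy : ∀ i, LinearIndependent F (y i) := fun i =>
    (Module.finBasis F (V i)).linearIndependent.map' (V i).subtype (Submodule.ker_subtype _)
  have hspan : ∀ (W : Submodule F M) [FiniteDimensional F W],
      Submodule.span F (Set.range fun l => (Module.finBasis F W l : M)) = W := by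
    intro W _
    have h := congrArg (Submodule.map W.subtype) (Module.finBasis F W).span_eq
    rw [Submodule.map_span, ← Set.range_comp, Submodule.map_subtype_top] at h
    exact h
  have hiff : ∀ i j, LinearIndependent F (Sum.elim (x i) (y j)) ↔ U i ⊓ V j = ⊥ := by
    intro i j
    rw [linearIndependent_sum]
    simp only [Sum.elim_comp_inl, Sum.elim_comp_inr, hx, hy, true_and]
    rw [hspan (U i), hspan (V j), disjoint_iff]
  obtain ⟨K, _, _, φ, hφ⟩ := exists_generic_map (F := F) (M := M) (Fin a ⊕ Fin b)
  let e : ∀ i j, Fin (Module.finrank F (U i)) ⊕ Fin (Module.finrank F (V j)) ↪ Fin a ⊕ Fin b :=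
    fun i j => Function.Embedding.sumMap (Fin.castLEEmb (hdimU i)) (Fin.castLEEmb (hdimV j))
  choose w hw hwe using fun i => exists_linearIndependent_extension (e i i) _
    (hφ _ (e i i) (Sum.elim (x i) (y i)) ((hiff i i).mpr (hdisj i)))
  refine card_le_choose_of_skew (fun i => w i ∘ Sum.inl) (fun i => w i ∘ Sum.inr)
    (fun i => by simpa using hw i) (fun i j hij h => hskew i j hij ?_)
  rw [← hiff]
  -- The projected bases of `U i` and `V j` form a subfamily of the independent family `h`.
  have : FaithfulSMul F K :=
    (faithfulSMul_iff_algebraMap_injective F K).mpr (algebraMap F K).injective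
  have h1 := (h.comp (e i j) (e i j).injective).restrict_scalars' F
  refine LinearIndependent.of_comp φ ?_
  convert h1 using 1
  ext1 (l | l)
  · exact (hwe i (Sum.inl l)).symm
  · exact (hwe j (Sum.inr l)).symm
end

section
/- Let ℓ₁,…,ℓ_k be positive integers and let (U_{ij}) for 1 ≤ i ≤ m, 1 ≤ j ≤ k be subspaces of a vector space U over a field F satisfying: (i) dim U_{ij} ≤ ℓ_j for all i, j; (ii) for each fixed i, dim(U_{i1} + U_{i2} + ⋯ + U_{ik}) = Σ_{j=1}^k dim U_{ij}; and (iii) for each i < i′ there exist j < j′ with U_{ij} ∩ U_{i′j′} ≠ {0}. Then m ≤ (Σ_{r=1}^k ℓ_r)! / (∏_{r=1}^k ℓ_r!). -/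
/-!
The idea is to embed everything in a product of exterior powers whose dimension is the
multinomial coefficient. Adjoining new basis vectors, one may assume `dim U i j = ℓ j`
(`exists_padding`). Put `n j = ∑_{j' ≥ j} ℓ j'`. Over a purely transcendental extension `K` of `F`
there are `F`-linear maps `φ j` from the ambient space to `K ^ n j`, with independent
indeterminates as coefficients, which send any `n j` linearly independent vectors to a `K`-basis
(`exists_generic_functionals`). Let `D j i i'` be the determinant of the `n j` vectors of
`K ^ n j` obtained by applying `φ j` to a basis of `U i j` followed by bases of the `U i' j'`,
`j < j'`.

* Since row `i` is a direct sum, `D j i i ≠ 0` for all `j`.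
* If `i < i'`, some `U i j` meets some `U i' j'` with `j < j'` nontrivially, so `D j i i' = 0`
  for that `j` (`det_eq_zero_of_not_linearIndependent`).
* `D j i i'` is a linear form depending on `i'` evaluated at an element of `⋀^(ℓ j) (K ^ n j)`
  depending on `i`, so it is a sum of `(n j).choose (ℓ j)` products of a function of `i` and a
  function of `i'` (`exists_laplace_factorization`).

Hence the matrix `∏ j, D j i i'` is triangular with nonzero diagonal, so it has rank `m`, while it
factors through a space of dimension `∏ j, (n j).choose (ℓ j)`, the multinomial coefficient
(`le_card_of_triangular`, `prod_choose_mul_prod_factorial`).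
-/

/-- Over a suitable field extension there is a family of `F`-linear functionals in general position:
any `n` distinct ones among them restrict to independent functionals on every `n`-dimensional
subspace of `V`. They are `e_β ↦ X (c, β)` for a basis `e` of `V` and indeterminates `X`. Using
indeterminates covers finite fields `F`, over which `V` itself need not carry enough functionals. -/
theorem exists_generic_functionals (F V C : Type*) [Field F] [AddCommGroup V] [Module F V] :
    ∃ (K : Type (max u_1 u_2 u_3)) (_ : Field K) (_ : Algebra F K) (Φ : C → V →ₗ[F] K),
      ∀ (T : Type) [Fintype T] [DecidableEq T] (ι : T → C), Function.Injective ι →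
        ∀ v : T → V, LinearIndependent F v →
          (Matrix.of fun s t => Φ (ι t) (v s)).det ≠ 0 := by
  classical
  let b := Module.Basis.ofVectorSpace F V
  let B := Module.Basis.ofVectorSpaceIndex F V
  let R := MvPolynomial (C × B) F
  let Φ₀ : C → V →ₗ[F] R := fun c => b.constr F (fun β => MvPolynomial.X (c, β))
  refine ⟨FractionRing R, inferInstance, inferInstance,
    fun c => (IsScalarTower.toAlgHom F R (FractionRing R)).toLinearMap ∘ₗ Φ₀ c, ?_⟩
  intro T _ _ ι hι v hv h0
  obtain ⟨g, hg⟩ := LinearMap.exists_leftInverse_of_injective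
    (Finsupp.linearCombination F v) (LinearMap.ker_eq_bot.2 hv)
  have hgv : ∀ s, g (v s) = Finsupp.single s 1 := fun s => by
    simpa using LinearMap.congr_fun hg (Finsupp.single s 1)
  have hR : (Matrix.of fun s t => Φ₀ (ι t) (v s)).det = 0 := by
    apply IsFractionRing.injective R (FractionRing R)
    rw [map_zero, RingHom.map_det, ← h0]
    rfl
  -- Specialising the indeterminates to the values of the dual functionals gives the identity.
  let f : C → V →ₗ[F] F := fun c =>
    if h : ∃ t, ι t = c then Finsupp.lapply h.choose ∘ₗ g else 0
  have hf : ∀ t, f (ι t) = Finsupp.lapply t ∘ₗ g := fun t => by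
    have h : ∃ t', ι t' = ι t := ⟨t, rfl⟩
    have : h.choose = t := hι h.choose_spec
    simp only [f, dif_pos h, this]
  let ev : R →ₐ[F] F := MvPolynomial.aeval fun p => f p.1 (b p.2)
  have hev : ∀ c u, ev (Φ₀ c u) = f c u := fun c u => by
    have : ev.toLinearMap ∘ₗ Φ₀ c = f c := b.ext fun β => by
      simp only [LinearMap.comp_apply, Φ₀, Module.Basis.constr_basis]
      exact MvPolynomial.aeval_X _ _
    exact LinearMap.congr_fun this u
  have := congrArg ev hR
  rw [map_zero, AlgHom.map_det] at this
  have h1 : ev.mapMatrix (Matrix.of fun s t => Φ₀ (ι t) (v s)) = 1 := by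
    ext s t
    simp [hev, hf, hgv, Matrix.one_apply, Finsupp.single_apply]
  rw [h1, Matrix.det_one] at this
  exact one_ne_zero this

theorem det_eq_zero_of_not_linearIndependent {F V K T : Type*} [Field F] [AddCommGroup V]
    [Module F V] [Field K] [Algebra F K] [Fintype T] [DecidableEq T] (Φ : T → V →ₗ[F] K)
    (v : T → V) (hv : ¬ LinearIndependent F v) :
    (Matrix.of fun s t => Φ t (v s)).det = 0 := by
  obtain ⟨c, hc, s, hs⟩ := Fintype.not_linearIndependent_iff.1 hv
  refine Matrix.exists_vecMul_eq_zero_iff.1 ⟨fun s => algebraMap F K (c s), ?_, ?_⟩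
  · intro h
    exact hs (by simpa using congrFun h s)
  · ext t
    have := congrArg (Φ t) hc
    simpa [Matrix.vecMul, dotProduct, Algebra.smul_def] using this

/-- Generalised Laplace expansion along the first `p` rows, in the weak form that the determinant
is a bilinear pairing of `(p + |S|).choose p` coordinates. As an alternating function of the first
`p` rows, the determinant is a linear form on `⋀^p`; expand it in a basis. -/
theorem exists_laplace_factorization (K S : Type*) [Field K] [Fintype S] [DecidableEq S]
    (p : ℕ) :
    ∃ (a : (Fin p → (Fin p ⊕ S → K)) → Fin ((p + Fintype.card S).choose p) → K)
      (b : (S → (Fin p ⊕ S → K)) → Fin ((p + Fintype.card S).choose p) → K),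
      ∀ x y, (Matrix.of (Sum.elim x y)).det = ∑ s, a x s * b y s := by
  let W := Fin p ⊕ S → K
  have hfr : Module.finrank K (⋀[K]^p W) = (p + Fintype.card S).choose p := by
    rw [exteriorPower.finrank_eq]; simp [W]
  let e := Module.finBasisOfFinrankEq K (⋀[K]^p W) hfr
  let D : (S → W) → W [⋀^Fin p]→ₗ[K] K := fun y =>
    { toFun := fun x => (Matrix.of (Sum.elim x y)).det
      map_update_add' := fun {inst} x i u w => by
        obtain rfl := Subsingleton.elim inst (instDecidableEqFin p)
        simp only [← Sum.update_elim_inl]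
        exact Matrix.detRowAlternating.map_update_add (Sum.elim x y) (Sum.inl i) u w
      map_update_smul' := fun {inst} x i c u => by
        obtain rfl := Subsingleton.elim inst (instDecidableEqFin p)
        simp only [← Sum.update_elim_inl]
        exact Matrix.detRowAlternating.map_update_smul (Sum.elim x y) (Sum.inl i) c u
      map_eq_zero_of_eq' := fun x i j hij hne =>
        Matrix.detRowAlternating.map_eq_zero_of_eq (Sum.elim x y) (i := Sum.inl i)
          (j := Sum.inl j) hij (by simpa using hne) }
  refine ⟨fun x s => e.repr (exteriorPower.ιMulti K p x) s,
    fun y s => exteriorPower.alternatingMapLinearEquiv (D y) (e s), fun x y => ?_⟩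
  have h : exteriorPower.alternatingMapLinearEquiv (D y) (exteriorPower.ιMulti K p x)
      = (Matrix.of (Sum.elim x y)).det := by
    rw [exteriorPower.alternatingMapLinearEquiv_apply_ιMulti]; rfl
  rw [← h]
  conv_lhs => rw [← e.sum_repr (exteriorPower.ιMulti K p x)]
  simp only [map_sum, map_smul, smul_eq_mul]

/-- The rank bound behind the skew Bollobás-type inequality. -/
theorem le_card_of_triangular {K : Type*} [Field K] {m : ℕ} {σ : Type*} [Fintype σ]
    (A B : Fin m → σ → K) (hdiag : ∀ i, ∑ s, A i s * B i s ≠ 0)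
    (hupper : ∀ i i', i < i' → ∑ s, A i s * B i' s = 0) : m ≤ Fintype.card σ := by
  let P : Matrix (Fin m) (Fin m) K := Matrix.of A * (Matrix.of B).transpose
  have hP : ∀ i i', P i i' = ∑ s, A i s * B i' s := fun i i' => rfl
  have hdet : P.det ≠ 0 := by
    rw [Matrix.det_of_isLowerTriangular P fun i i' h => (hP _ _).trans (hupper _ _ h)]
    exact Finset.prod_ne_zero_iff.2 fun i _ => hdiag i
  have h1 : P.rank = m := by
    rw [Matrix.rank_of_isUnit P ((Matrix.isUnit_iff_isUnit_det P).2 hdet.isUnit)]; simp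
  calc m = P.rank := h1.symm
    _ ≤ (Matrix.of A).rank := Matrix.rank_mul_le_left _ _
    _ ≤ Fintype.card σ := Matrix.rank_le_card_width _

theorem prod_choose_mul_prod_factorial (k : ℕ) (ℓ : Fin k → ℕ) :
    (∏ j, (ℓ j + ∑ j' : {j' // j < j'}, ℓ j').choose (ℓ j)) * ∏ j, (ℓ j).factorial
      = (∑ j, ℓ j).factorial := by
  have hsub : ∀ {k : ℕ} (ℓ : Fin k → ℕ) (j : Fin k),
      ∑ j' : {j' // j < j'}, ℓ j' = ∑ j' ∈ Finset.Ioi j, ℓ j' := fun ℓ j =>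
    (Finset.sum_subtype (Finset.Ioi j) (fun x => by simp) ℓ).symm
  simp only [hsub]
  induction k with
  | zero => simp
  | succ k ih =>
    have := ih (fun j => ℓ j.succ)
    rw [Fin.prod_univ_succ, Fin.prod_univ_succ, Fin.sum_univ_succ]
    have h0 : ∑ j' ∈ Finset.Ioi (0 : Fin (k+1)), ℓ j' = ∑ j : Fin k, ℓ j.succ := by
      simp [Fin.Ioi_zero_eq_map]
    have hs : ∀ j : Fin k, ∑ j' ∈ Finset.Ioi j.succ, ℓ j' = ∑ j' ∈ Finset.Ioi j, ℓ j'.succ := by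
      intro j; rw [← Fin.map_succEmb_Ioi]; simp
    simp only [h0, hs]
    have hc := Nat.add_choose_mul_factorial_mul_factorial (ℓ 0) (∑ j : Fin k, ℓ j.succ)
    rw [← Nat.choose_symm_add] at hc
    rw [← hc, ← this]
    ring

/-- Independent subspaces `W j` of dimension at most `ℓ j` can be enlarged, inside a bigger space,
to independent subspaces of dimension exactly `ℓ j`; `x ⟨j, ·⟩` is a basis of the `j`-th one. The
new ambient space depends only on `ℓ`, so that all rows can be enlarged simultaneously. -/
theorem exists_padding {F M : Type*} [Field F] [AddCommGroup M] [Module F M] {k : ℕ}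
    (ℓ : Fin k → ℕ) (W : Fin k → Submodule F M) (hfd : ∀ j, FiniteDimensional F (W j))
    (hdim : ∀ j, Module.finrank F (W j) ≤ ℓ j)
    (hsum : Module.finrank F ↥(∑ j, W j) = ∑ j, Module.finrank F (W j)) :
    ∃ x : (Σ j, Fin (ℓ j)) → M × ((Σ j, Fin (ℓ j)) → F), LinearIndependent F x ∧
      ∀ j, ∀ u ∈ W j, (u, 0) ∈ Submodule.span F (Set.range fun s => x ⟨j, s⟩) := by
  classical
  let d := fun j => Module.finrank F (W j)
  let b := fun j => Module.finBasis F (W j)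
  let y : (Σ j, Fin (d j)) → M := fun q => b q.1 q.2
  have hspan : ∀ j, Submodule.span F (Set.range fun s => (b j s : M)) = W j := fun j => by
    have := congrArg (Submodule.map (W j).subtype) (b j).span_eq
    rwa [Submodule.map_span, ← Set.range_comp, Submodule.map_subtype_top] at this
  have hy : LinearIndependent F y := by
    rw [linearIndependent_iff_card_le_finrank_span, Set.finrank]
    have : Submodule.span F (Set.range y) = ∑ j, W j := by
      rw [Set.range_sigma_eq_iUnion_range, Submodule.span_iUnion]
      exact (iSup_congr hspan).trans (Finset.sup_univ_eq_iSup W).symm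
    rw [this, hsum]
    simp [d]
  have hz : LinearIndependent F (fun q : (Σ j, Fin (ℓ j)) => (Pi.single q 1 : _ → F)) :=
    Pi.linearIndependent_single_one _ _
  -- The first `d j` vectors of block `j` come from `W j`, the others are new unit vectors.
  let e : (Σ j, Fin (ℓ j)) → (Σ j, Fin (d j)) ⊕ (Σ j, Fin (ℓ j)) := fun q =>
    if h : (q.2 : ℕ) < d q.1 then Sum.inl ⟨q.1, ⟨q.2, h⟩⟩ else Sum.inr q
  have he : Function.Injective e := by
    rintro ⟨j, s⟩ ⟨j', s'⟩ h
    simp only [e] at h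
    split_ifs at h
    · simp only [Sum.inl.injEq, Sigma.mk.injEq] at h
      obtain ⟨rfl, h⟩ := h
      simp [Fin.ext_iff] at h
      simp [Fin.ext_iff, h]
    · simpa using h
  refine ⟨_, (linearIndependent_inl_union_inr' hy hz).comp e he, fun j u hu => ?_⟩
  have hu' : u ∈ Submodule.span F (Set.range fun s => (b j s : M)) := by rwa [hspan]
  have := Submodule.mem_map_of_mem (f := LinearMap.inl F M ((Σ j, Fin (ℓ j)) → F)) hu'
  rw [Submodule.map_span] at this
  refine Submodule.span_mono ?_ this
  rintro _ ⟨_, ⟨s, rfl⟩, rfl⟩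
  refine ⟨⟨s, s.2.trans_le (hdim j)⟩, ?_⟩
  have : e ⟨j, ⟨s, s.2.trans_le (hdim j)⟩⟩ = Sum.inl ⟨j, s⟩ := by
    simp [e, d]
  simp [this, y]

/-- Theorem 3 (first remedy): Einstein's Conjecture with the direct-sum condition. -/
theorem einstein_first_remedy {F : Type*} [Field F] {M : Type*} [AddCommGroup M] [Module F M]
    (k m : ℕ) (ℓ : Fin k → ℕ) (hℓ : ∀ r, 0 < ℓ r)
    (U : Fin m → Fin k → Submodule F M)
    (hfd : ∀ i j, FiniteDimensional F (U i j))
    (hdim : ∀ i j, Module.finrank F (U i j) ≤ ℓ j)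
    (hsum : ∀ i, Module.finrank F ↥(∑ j, U i j) = ∑ j, Module.finrank F (U i j))
    (hcross : ∀ i i' : Fin m, i < i' → ∃ j j' : Fin k, j < j' ∧ U i j ⊓ U i' j' ≠ ⊥) :
    m ≤ (∑ r, ℓ r).factorial / ∏ r, (ℓ r).factorial := by
  classical
  choose x hx hxU using fun i => exists_padding ℓ (U i) (hfd i) (hdim i) (hsum i)
  -- `T j` indexes the `n j = ℓ j + ∑_{j' > j} ℓ j'` rows and columns of the `j`-th determinant.
  let S : Fin k → Type := fun j => Σ j' : {j' : Fin k // j < j'}, Fin (ℓ j')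
  let T : Fin k → Type := fun j => Fin (ℓ j) ⊕ S j
  obtain ⟨K, _, _, Φ, hΦ⟩ :=
    exists_generic_functionals F (M × ((Σ j, Fin (ℓ j)) → F)) (Σ j, T j)
  choose a b hab using fun j => exists_laplace_factorization K (S j) (ℓ j)
  let left : ∀ j, Fin m → Fin (ℓ j) → T j → K := fun j i s t => Φ ⟨j, t⟩ (x i ⟨j, s⟩)
  let right : ∀ j, Fin m → S j → T j → K := fun j i q t => Φ ⟨j, t⟩ (x i ⟨q.1, q.2⟩)
  let v : ∀ j, Fin m → Fin m → T j → M × ((Σ j, Fin (ℓ j)) → F) := fun j i i' =>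
    Sum.elim (fun s => x i ⟨j, s⟩) (fun q => x i' ⟨q.1, q.2⟩)
  have hD : ∀ j i i', ∑ s, a j (left j i) s * b j (right j i') s
      = (Matrix.of fun s t => Φ ⟨j, t⟩ (v j i i' s)).det := fun j i i' => by
    rw [← hab]
    congr 1
    ext s t
    rcases s with s | s <;> rfl
  have hprod : ∀ i i', ∑ σ : (∀ j, Fin ((ℓ j + Fintype.card (S j)).choose (ℓ j))),
      (∏ j, a j (left j i) (σ j)) * (∏ j, b j (right j i') (σ j))
      = ∏ j, (Matrix.of fun s t => Φ ⟨j, t⟩ (v j i i' s)).det := fun i i' => by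
    simp only [← hD, ← Finset.prod_mul_distrib]
    rw [Finset.prod_univ_sum, Fintype.piFinset_univ]
  have hm := le_card_of_triangular
    (fun i (σ : ∀ j, Fin ((ℓ j + Fintype.card (S j)).choose (ℓ j))) => ∏ j, a j (left j i) (σ j))
    (fun i σ => ∏ j, b j (right j i) (σ j)) ?_ ?_
  · rw [Nat.le_div_iff_mul_le (Finset.prod_pos fun r _ => Nat.factorial_pos _),
      ← prod_choose_mul_prod_factorial]
    refine Nat.mul_le_mul_right _ (hm.trans_eq ?_)
    simp [S]
  · intro i
    rw [hprod]
    refine Finset.prod_ne_zero_iff.2 fun j _ => ?_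
    refine hΦ (T j) (fun t => ⟨j, t⟩) sigma_mk_injective _ ?_
    let e : T j → Σ j, Fin (ℓ j) := Sum.elim (fun s => ⟨j, s⟩) (fun q => ⟨q.1, q.2⟩)
    have he : Function.Injective e := by
      rintro (s | ⟨⟨p, hp⟩, s⟩) (s' | ⟨⟨p', hp'⟩, s'⟩) h
      · have : s = s' := by simpa [e] using h
        rw [this]
      · simp only [e, Sum.elim_inl, Sum.elim_inr, Sigma.mk.injEq] at h
        exact absurd h.1 hp'.ne
      · simp only [e, Sum.elim_inl, Sum.elim_inr, Sigma.mk.injEq] at h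
        exact absurd h.1 hp.ne'
      · simp only [e, Sum.elim_inr, Sigma.mk.injEq] at h
        obtain ⟨rfl, h⟩ := h
        rw [eq_of_heq h]
    have : v j i i = x i ∘ e := by
      ext1 t; rcases t with s | s <;> rfl
    rw [this]
    exact (hx i).comp e he
  · intro i i' hii
    rw [hprod]
    obtain ⟨j, j', hjj, hne⟩ := hcross i i' hii
    obtain ⟨u, ⟨hu, hu'⟩, hu0⟩ := Submodule.exists_mem_ne_zero_of_ne_bot hne
    refine Finset.prod_eq_zero (Finset.mem_univ j) ?_
    refine det_eq_zero_of_not_linearIndependent (fun t => Φ ⟨j, t⟩) _ fun hli => ?_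
    have hdisj := (linearIndependent_sum.1 hli).2.2
    have h1 := hxU i j u hu
    have h2 : (u, 0) ∈ Submodule.span F (Set.range (v j i i' ∘ Sum.inr)) := by
      refine Submodule.span_mono ?_ (hxU i' j' u hu')
      rintro _ ⟨s, rfl⟩
      exact ⟨⟨⟨j', hjj⟩, s⟩, rfl⟩
    have := Submodule.disjoint_def.1 hdisj _ h1 h2
    exact hu0 (congrArg Prod.fst this)
end

section
/- Let ℓ₁,…,ℓ_k be positive integers and let (A_{ij}) for 1 ≤ i ≤ m, 1 ≤ j ≤ k be finite sets satisfying: (i) |A_{ij}| ≤ ℓ_j for all i, j; (ii) for each fixed i, the sets A_{i1},…,A_{ik} are pairwise disjoint; and (iii) for each i < i′ there exist j < j′ with A_{ij} ∩ A_{i′j′} ≠ ∅. Then m ≤ (Σ_{r=1}^k ℓ_r)! / (∏_{r=1}^k ℓ_r!). -/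
/-!
The proof is the polynomial method. Send the ground set, together with one extra dummy element,
injectively into a field `K`. With the row `i` associate the polynomials
`P i j = ∏_{r < j} ∏_{a ∈ A i r} (X - a)`, of degree at most `s j = ∑_{r < j} ℓ r`, and let `y i j`
list the elements of `A i j`, padded with the dummy element to length `ℓ j`. Put
`M i i' = ∏_j ∏_t (P i j)(y i' j t)`. The crossing condition makes `M i i'` vanish for `i < i'`,
and disjointness within a row makes `M i i` nonzero, so `M` is triangular of rank `m`.

On the other hand `∏_t P(y t)` is symmetric in the `ℓ j` variables `y t` and has degree at most
`s j` in each, so it is a combination of monomial symmetric functions indexed by the multisets of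
size `ℓ j` in `{0, …, s j}` (`prod_eval_eq_sum_sym`). Hence `M` factors through a space of dimension
`∏_j (s j + ℓ j).choose (ℓ j)`, which is the multinomial coefficient (`prod_choose_mul`).
-/

open Finset in
/-- The multinomial coefficient as a telescoping product of binomial coefficients. -/
theorem prod_choose_mul (k : ℕ) (ℓ : Fin k → ℕ) :
    (∏ j, ((∑ r with r < j, ℓ r) + ℓ j).choose (ℓ j)) * ∏ j, (ℓ j).factorial
      = (∑ r, ℓ r).factorial := by
  induction k with
  | zero => simp
  | succ k ih =>
    have h := ih (fun r => ℓ r.castSucc)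
    simp only [sum_filter] at h ⊢
    simp only [Fin.prod_univ_castSucc, Fin.sum_univ_castSucc, Fin.castSucc_lt_castSucc_iff,
      Fin.castSucc_lt_last, if_true, lt_irrefl, if_false, add_zero,
      (Fin.castSucc_lt_last _).not_gt]
    rw [← Nat.add_choose_mul_factorial_mul_factorial, ← h]
    ring

/-- The multiset of values of a tuple. -/
def tupleSym {β : Type*} {n : ℕ} (g : Fin n → β) : Sym β n :=
  ⟨Finset.univ.val.map g, by simp⟩

open Finset in
/-- Expansion of `∏ t, p (y t)` into monomial symmetric functions of `y`: the first factor of each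
summand depends only on `p`, the second only on `y`. -/
theorem prod_eval_eq_sum_sym {K : Type*} [CommRing K] (p : Polynomial K) (s n : ℕ)
    (hp : p.natDegree ≤ s) (y : Fin n → K) :
    ∏ t, p.eval (y t) = ∑ S : Sym (Fin (s + 1)) n,
      ((S : Multiset (Fin (s + 1))).map fun d => p.coeff d).prod *
        ∑ g : Fin n → Fin (s + 1) with tupleSym g = S, ∏ t, y t ^ (g t : ℕ) := by
  have h : ∀ t, p.eval (y t) = ∑ d : Fin (s + 1), p.coeff d * y t ^ (d : ℕ) := fun t => by
    rw [Polynomial.eval_eq_sum_range' (Nat.lt_succ_of_le hp), Finset.sum_range]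
  simp_rw [h]
  rw [Finset.prod_univ_sum, Fintype.piFinset_univ,
    ← Finset.sum_fiberwise univ (tupleSym (n := n))]
  refine sum_congr rfl fun S _ => ?_
  rw [mul_sum]
  refine sum_congr rfl fun g hg => ?_
  rw [← (mem_filter.1 hg).2, prod_mul_distrib]
  simp [tupleSym, Finset.prod, Function.comp_def]

/-- A triangular matrix with nonzero diagonal cannot factor through a smaller index type. -/
theorem le_card_of_triangular_s2 {K : Type*} [Field K] {m : ℕ} {ι : Type*} [Fintype ι]
    (C : Matrix (Fin m) ι K) (D : Matrix ι (Fin m) K)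
    (h0 : ∀ i i', i < i' → (C * D) i i' = 0) (h1 : ∀ i, (C * D) i i ≠ 0) :
    m ≤ Fintype.card ι := by
  have hdet : (C * D).det ≠ 0 := by
    rw [Matrix.det_of_isLowerTriangular _ (fun i j hij => h0 i j (by simpa using hij))]
    exact Finset.prod_ne_zero_iff.2 fun i _ => h1 i
  have hr := Matrix.rank_of_isUnit (C * D) ((Matrix.isUnit_iff_isUnit_det _).2 hdet.isUnit)
  have h2 := Matrix.rank_mul_le_left C D
  have h3 := Matrix.rank_le_card_width C
  rw [Fintype.card_fin] at hr
  omega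

open Finset in
/-- Polynomial criterion: rows of polynomials and rows of points whose evaluation products are
triangular with nonzero diagonal. -/
theorem le_prod_choose {K : Type*} [Field K] (k m : ℕ) (s ℓ : Fin k → ℕ)
    (P : Fin m → Fin k → Polynomial K) (hP : ∀ i j, (P i j).natDegree ≤ s j)
    (y : Fin m → (j : Fin k) → Fin (ℓ j) → K)
    (h0 : ∀ i i', i < i' → ∃ j t, (P i j).eval (y i' j t) = 0)
    (h1 : ∀ i j t, (P i j).eval (y i j t) ≠ 0) :
    m ≤ ∏ j, (s j + ℓ j).choose (ℓ j) := by
  let C : Matrix (Fin m) ((j : Fin k) → Sym (Fin (s j + 1)) (ℓ j)) K := fun i S =>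
    ∏ j, ((S j : Multiset (Fin (s j + 1))).map fun d => (P i j).coeff d).prod
  let D : Matrix ((j : Fin k) → Sym (Fin (s j + 1)) (ℓ j)) (Fin m) K := fun S i =>
    ∏ j, ∑ g : Fin (ℓ j) → Fin (s j + 1) with tupleSym g = S j, ∏ t, y i j t ^ (g t : ℕ)
  have hCD : ∀ i i', (C * D) i i' = ∏ j, ∏ t, (P i j).eval (y i' j t) := fun i i' => by
    simp_rw [fun j => prod_eval_eq_sum_sym (P i j) (s j) (ℓ j) (hP i j) (y i' j)]
    rw [Finset.prod_univ_sum, Fintype.piFinset_univ, Matrix.mul_apply]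
    exact sum_congr rfl fun S _ => prod_mul_distrib.symm
  have h := le_card_of_triangular_s2 C D
    (fun i i' hi => by
      obtain ⟨j, t, h⟩ := h0 i i' hi
      rw [hCD]
      exact prod_eq_zero (mem_univ j) (prod_eq_zero (mem_univ t) h))
    (fun i => by
      rw [hCD]
      exact prod_ne_zero_iff.2 fun j _ => prod_ne_zero_iff.2 fun t _ => h1 i j t)
  refine h.trans_eq ?_
  rw [Fintype.card_pi]
  refine prod_congr rfl fun j _ => ?_
  rw [Sym.card_sym_eq_choose, Fintype.card_fin]
  congr 1
  omega

/-- Theorem 2.8 of Einstein: Bollobás-type theorem for ordered families of finite sets. -/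
theorem einstein_sets {α : Type*} [DecidableEq α]
    (k m : ℕ) (ℓ : Fin k → ℕ) (hℓ : ∀ r, 0 < ℓ r)
    (A : Fin m → Fin k → Finset α)
    (hcard : ∀ i j, (A i j).card ≤ ℓ j)
    (hdisj : ∀ i, ∀ j j' : Fin k, j ≠ j' → Disjoint (A i j) (A i j'))
    (hcross : ∀ i i' : Fin m, i < i' →
      ∃ j j' : Fin k, j < j' ∧ (A i j ∩ A i' j').Nonempty) :
    m ≤ (∑ r, ℓ r).factorial / ∏ r, (ℓ r).factorial := by
  rw [Nat.le_div_iff_mul_le (Finset.prod_pos fun r _ => Nat.factorial_pos _),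
    ← prod_choose_mul]
  refine Nat.mul_le_mul_right _ ?_
  -- A rational function field supplies distinct scalars for all elements; `none` is the dummy.
  obtain ⟨K, _, φ, hφ⟩ : ∃ (K : Type _) (_ : Field K) (φ : Option α → K), φ.Injective :=
    ⟨FractionRing (MvPolynomial (Option α) ℚ), inferInstance,
      fun a => algebraMap (MvPolynomial (Option α) ℚ) _ (MvPolynomial.X a),
      (IsFractionRing.injective (MvPolynomial (Option α) ℚ) _).comp MvPolynomial.X_injective⟩
  let P : Fin m → Fin k → Polynomial K := fun i j =>
    ∏ r with r < j, ∏ a ∈ A i r, (Polynomial.X - Polynomial.C (φ (some a)))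
  have hroot : ∀ i j x, (P i j).eval (φ x) = 0 ↔ ∃ r < j, ∃ a ∈ A i r, x = some a := by
    intro i j x
    simp [P, Polynomial.eval_prod, Finset.prod_eq_zero_iff, sub_eq_zero, hφ.eq_iff]
  -- Out-of-range lookups return `none`, which pads each list to length `ℓ j`.
  refine le_prod_choose k m _ ℓ P ?_ (fun i j t => φ (A i j).toList[(t : ℕ)]?) ?_ ?_
  · intro i j
    refine (Polynomial.natDegree_prod_le _ _).trans (Finset.sum_le_sum fun r _ => ?_)
    refine le_trans ?_ (hcard i r)
    rw [Polynomial.natDegree_finsetProd_X_sub_C_eq_card]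
  · intro i i' hi
    obtain ⟨j, j', hj, a, ha⟩ := hcross i i' hi
    rw [Finset.mem_inter] at ha
    obtain ⟨t, ht, hta⟩ := List.mem_iff_getElem.1 (Finset.mem_toList.2 ha.2)
    have ht' : t < ℓ j' := by
      have := hcard i' j'
      rw [Finset.length_toList] at ht
      omega
    exact ⟨j', ⟨t, ht'⟩, (hroot _ _ _).2 ⟨j, hj, a, ha.1,
      by simp [List.getElem?_eq_getElem ht, hta]⟩⟩
  · intro i j t h
    obtain ⟨r, hr, a, ha, hx⟩ := (hroot _ _ _).1 h
    exact Finset.disjoint_left.1 (hdisj i r j hr.ne) ha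
      (Finset.mem_toList.1 (List.mem_of_getElem? hx))
end

section
/- Let t ≥ 0 and let ℓ₁,…,ℓ_k be positive integers with ℓ_r ≥ t for all r. Let (A_{ij}) for 1 ≤ i ≤ m, 1 ≤ j ≤ k be finite sets satisfying: (i) |A_{ij}| ≤ ℓ_j for all i, j; (ii) for each fixed i and all j ≠ j′, |A_{ij} ∩ A_{ij′}| ≤ t; and (iii) for each i < i′ there exist j < j′ with |A_{ij} ∩ A_{i′j′}| > t. Then m ≤ (∏_{1 ≤ a < b ≤ k} (ℓ_a + ℓ_b − 2t)!) / (∏_{r=1}^k (ℓ_r − t)!)^{k-1}. -/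
/-!
The bound equals `∏_{a < b} C(ℓ_a + ℓ_b - 2t, ℓ_b - t)`, and the proof is a rank argument: an `m × m`
triangular matrix with nonzero diagonal is written as the entrywise product, over pairs `a < b`, of
matrices of rank at most `C(ℓ_a + ℓ_b - 2t, ℓ_b - t)`.

After padding with new elements, the sets are sets of rationals with `|A i j| = ℓ j`. For a fixed
pair `a < b` put `p = ℓ_b - t`, `q = ℓ_a - t`. A set `S` with `|S| = q + t` gives the polynomials
`f_S X^s`, `s < p`, and a set `T` with `|T| = p + t` gives `f_T X^s`, `s < q`, where `f_S` is the monic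
polynomial with simple roots exactly at `S`. A relation `f_S U + f_T V = 0` forces `f_{T \ S} ∣ U`,
so these `p + q` polynomials are linearly independent exactly when `|S ∩ T| ≤ t`
(`linearIndependent_shifts`, `exists_relation_shifts`). A generic linear map `Q : ℚ[X] → ℚ^(p+q)`
preserves independence of the finitely many families coming from `S = A i a`, `T = A i b`
(`exists_projection_det_ne_zero`). Hence the determinant of the images is nonzero for those
families, and it is zero as soon as `|S ∩ T| > t`. By Laplace expansion along the first `p`
rows (`exists_laplace`) this determinant is a sum of `C(p+q, p)` products of a function of `S` and
a function of `T`, which is the required rank bound.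

In the product over all pairs, the hypothesis on a single index `i` makes every factor on the
diagonal nonzero, and the hypothesis on `i < i'` makes some factor of the `(i, i')` entry vanish.
-/

open Polynomial

theorem le_card_of_triangular_factorization {m : ℕ} {S : Type*} [Fintype S]
    (u v : Fin m → S → ℚ) (hdiag : ∀ i, ∑ s, u i s * v i s ≠ 0)
    (hoff : ∀ i i', i < i' → ∑ s, u i s * v i' s = 0) : m ≤ Fintype.card S := by
  let U : Matrix (Fin m) S ℚ := Matrix.of u
  let V : Matrix S (Fin m) ℚ := (Matrix.of v).transpose
  have hdet : (U * V).det ≠ 0 := by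
    rw [Matrix.det_of_isLowerTriangular (U * V) (fun i j hij => hoff i j hij)]
    exact Finset.prod_ne_zero_iff.mpr fun i _ => hdiag i
  have hunit : IsUnit (U * V) := (Matrix.isUnit_iff_isUnit_det _).mpr hdet.isUnit
  have h := Matrix.rank_of_isUnit _ hunit
  rw [Fintype.card_fin] at h
  exact h ▸ (Matrix.rank_mul_le_left U V).trans U.rank_le_card_width

/-- Finitely many linearly independent families of the same size `n` are all kept independent by
one linear map onto `n`-dimensional space: a generic combination of left inverses works. -/
theorem exists_projection_det_ne_zero {ι n W : Type*} [Fintype ι] [Fintype n] [DecidableEq n]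
    [AddCommGroup W] [Module ℚ W] (w : ι → n → W) (hw : ∀ i, LinearIndependent ℚ (w i)) :
    ∃ Q : W →ₗ[ℚ] (n → ℚ), ∀ i, (Matrix.of fun s => Q (w i s)).det ≠ 0 := by
  classical
  have hinv : ∀ i, ∃ R : W →ₗ[ℚ] (n → ℚ), ∀ s, R (w i s) = Pi.single s 1 := by
    intro i
    obtain ⟨g, hg⟩ := LinearMap.exists_leftInverse_of_injective
      (Finsupp.linearCombination ℚ (w i)) (LinearMap.ker_eq_bot.mpr (hw i))
    refine ⟨(Finsupp.linearEquivFunOnFinite ℚ ℚ n).toLinearMap ∘ₗ g, fun s => ?_⟩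
    have := LinearMap.congr_fun hg (Finsupp.single s 1)
    simp at this
    simp [this]
  choose R hR using hinv
  -- The determinant of the `i`-th family under `∑ l, y l • R l`, as a polynomial in `y`.
  let M : ι → Matrix n n (MvPolynomial ι ℚ) := fun i => Matrix.of fun s r =>
    ∑ l, MvPolynomial.X l * MvPolynomial.C (R l (w i s) r)
  have heval : ∀ i (y : ι → ℚ), MvPolynomial.eval y (M i).det =
      (Matrix.of fun s => (∑ l, y l • R l) (w i s)).det := by
    intro i y
    rw [RingHom.map_det]
    congr 1
    ext s r
    simp [M]
  have hne : ∏ i, (M i).det ≠ 0 := by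
    refine Finset.prod_ne_zero_iff.mpr fun i _ h0 => ?_
    have h1 := heval i (Pi.single i 1)
    have h2 : (Matrix.of fun s => (∑ l, (Pi.single i 1 : ι → ℚ) l • R l) (w i s)) =
        (1 : Matrix n n ℚ) := by
      ext s r
      simp [Pi.single_apply, hR, Matrix.one_apply, eq_comm]
    rw [h0, h2, Matrix.det_one, map_zero] at h1
    exact zero_ne_one h1
  obtain ⟨y, hy⟩ : ∃ y : ι → ℚ, MvPolynomial.eval y (∏ i, (M i).det) ≠ 0 := by
    by_contra! h
    exact hne (MvPolynomial.funext fun y => by rw [h y, map_zero])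
  refine ⟨∑ l, y l • R l, fun i => ?_⟩
  rw [map_prod] at hy
  rw [← heval]
  exact Finset.prod_ne_zero_iff.mp hy i (Finset.mem_univ i)

/-- The determinant with rows `P` followed by rows `B`, as an alternating map of `P`. -/
noncomputable def detLeft {p q : ℕ} (B : Fin q → Fin p ⊕ Fin q → ℚ) :
    (Fin p ⊕ Fin q → ℚ) [⋀^Fin p]→ₗ[ℚ] ℚ where
  toFun P := (Matrix.of (Sum.elim P B)).det
  map_update_add' P i x y := by
    rename_i inst
    obtain rfl : inst = instDecidableEqFin p := Subsingleton.elim _ _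
    have h := (Matrix.detRowAlternating (R := ℚ) (n := Fin p ⊕ Fin q)).map_update_add
      (Sum.elim P B) (Sum.inl i) x y
    simp only [Sum.update_elim_inl] at h
    exact h
  map_update_smul' P i c x := by
    rename_i inst
    obtain rfl : inst = instDecidableEqFin p := Subsingleton.elim _ _
    have h := (Matrix.detRowAlternating (R := ℚ) (n := Fin p ⊕ Fin q)).map_update_smul
      (Sum.elim P B) (Sum.inl i) c x
    simp only [Sum.update_elim_inl] at h
    exact h
  map_eq_zero_of_eq' P i j hij hne :=
    Matrix.det_zero_of_row_eq (i := Sum.inl i) (j := Sum.inl j) (by simpa using hne) hij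

/-- Laplace expansion along the first `p` rows, keeping only the number of terms. It is obtained by
factoring the determinant through `⋀^p`, which has dimension `(p + q).choose p`. -/
theorem exists_laplace (p q : ℕ) :
    ∃ (φ : (Fin p → Fin p ⊕ Fin q → ℚ) → Fin ((p + q).choose p) → ℚ)
      (ψ : (Fin q → Fin p ⊕ Fin q → ℚ) → Fin ((p + q).choose p) → ℚ),
      ∀ P B, (Matrix.of (Sum.elim P B)).det = ∑ s, φ P s * ψ B s := by
  have hfr : Module.finrank ℚ (⋀[ℚ]^p (Fin p ⊕ Fin q → ℚ)) = (p + q).choose p := by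
    rw [exteriorPower.finrank_eq]; simp
  let b := Module.finBasisOfFinrankEq ℚ _ hfr
  refine ⟨fun P s => b.repr (exteriorPower.ιMulti ℚ p P) s,
    fun B s => exteriorPower.alternatingMapLinearEquiv (detLeft B) (b s), fun P B => ?_⟩
  have h1 : (Matrix.of (Sum.elim P B)).det =
      exteriorPower.alternatingMapLinearEquiv (detLeft B) (exteriorPower.ιMulti ℚ p P) := by
    rw [exteriorPower.alternatingMapLinearEquiv_apply_ιMulti]; rfl
  rw [h1]
  conv_lhs => rw [← b.sum_repr (exteriorPower.ιMulti ℚ p P)]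
  rw [map_sum]
  simp

/-- The monic polynomial with simple roots exactly at the elements of `S`. -/
noncomputable def rootPoly (S : Finset ℚ) : ℚ[X] := ∏ y ∈ S, (X - C y)

theorem rootPoly_monic (S : Finset ℚ) : (rootPoly S).Monic :=
  monic_prod_of_monic _ _ fun y _ => monic_X_sub_C y

theorem natDegree_rootPoly (S : Finset ℚ) : (rootPoly S).natDegree = S.card := by
  rw [rootPoly, natDegree_prod_of_monic _ (fun y => X - C y) fun y _ => monic_X_sub_C y]
  simp

theorem rootPoly_mul_sdiff (S T : Finset ℚ) :
    rootPoly S * rootPoly (T \ S) = rootPoly (S ∪ T) := by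
  rw [rootPoly, rootPoly, ← Finset.prod_union Finset.disjoint_sdiff, Finset.union_sdiff_self_eq_union]
  rfl

theorem eq_zero_of_rootPoly_relation {S T : Finset ℚ} {U V : ℚ[X]}
    (h : rootPoly S * U + rootPoly T * V = 0) (hU : U.degree < ((T \ S).card : ℕ)) : U = 0 := by
  have hcop : IsCoprime (rootPoly (T \ S)) (rootPoly S) := by
    refine IsCoprime.prod_left fun x hx => IsCoprime.prod_right fun y hy => ?_
    refine isCoprime_X_sub_C_of_isUnit_sub (IsUnit.mk0 _ (sub_ne_zero.mpr ?_))
    rintro rfl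
    exact (Finset.mem_sdiff.mp hx).2 hy
  have hdT : rootPoly (T \ S) ∣ rootPoly T :=
    Finset.prod_dvd_prod_of_subset _ _ _ Finset.sdiff_subset
  have hd : rootPoly (T \ S) ∣ rootPoly S * U := by
    rw [eq_neg_of_add_eq_zero_left h]
    exact (hdT.mul_right V).neg_right
  refine eq_zero_of_dvd_of_degree_lt (hcop.dvd_of_dvd_mul_left hd) ?_
  rwa [degree_eq_natDegree (rootPoly_monic _).ne_zero, natDegree_rootPoly]

/-- The polynomials `f_S X^s` for `s < p` together with `f_T X^s` for `s < q`, where `f` is `rootPoly`. -/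
noncomputable def shifts (p q : ℕ) (S T : Finset ℚ) : Fin p ⊕ Fin q → ℚ[X] :=
  Sum.elim (fun s => rootPoly S * X ^ (s : ℕ)) (fun s => rootPoly T * X ^ (s : ℕ))

theorem sum_smul_shifts (p q : ℕ) (S T : Finset ℚ) (g : Fin p ⊕ Fin q → ℚ) :
    ∑ x, g x • shifts p q S T x =
      rootPoly S * ∑ s : Fin p, monomial (s : ℕ) (g (Sum.inl s)) +
      rootPoly T * ∑ s : Fin q, monomial (s : ℕ) (g (Sum.inr s)) := by
  simp only [Fintype.sum_sum_type, shifts, Sum.elim_inl, Sum.elim_inr, Finset.mul_sum,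
    ← C_mul_X_pow_eq_monomial, smul_eq_C_mul]
  congr 1 <;> exact Finset.sum_congr rfl fun _ _ => by ring

theorem degree_sum_monomial_lt {n d : ℕ} (g : Fin n → ℚ) (h : n ≤ d) :
    (∑ s : Fin n, monomial (s : ℕ) (g s)).degree < (d : ℕ) := by
  rw [degree_lt_iff_coeff_zero]
  intro m hm
  rw [finsetSum_coeff]
  refine Finset.sum_eq_zero fun s _ => coeff_monomial_of_ne _ ?_
  have := s.2
  omega

theorem eq_zero_of_sum_monomial {n : ℕ} (g : Fin n → ℚ)
    (h : ∑ s : Fin n, monomial (s : ℕ) (g s) = 0) (s : Fin n) : g s = 0 := by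
  have := congrArg (fun P => P.coeff (s : ℕ)) h
  simpa [finsetSum_coeff, coeff_monomial, Fin.val_inj] using this

theorem linearIndependent_shifts {p q t : ℕ} {S T : Finset ℚ} (hS : S.card = q + t)
    (hT : T.card = p + t) (h : (S ∩ T).card ≤ t) : LinearIndependent ℚ (shifts p q S T) := by
  rw [Fintype.linearIndependent_iff]
  intro g hg
  rw [sum_smul_shifts] at hg
  have hST := Finset.card_sdiff_add_card_inter S T
  have hTS := Finset.card_sdiff_add_card_inter T S
  rw [Finset.inter_comm] at hTS
  have hU := eq_zero_of_rootPoly_relation hg (degree_sum_monomial_lt _ (by omega))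
  have hV := eq_zero_of_rootPoly_relation ((add_comm _ _).trans hg)
    (degree_sum_monomial_lt _ (by omega))
  rintro (s | s)
  · exact eq_zero_of_sum_monomial _ hU s
  · exact eq_zero_of_sum_monomial (fun s => g (Sum.inr s)) hV s

/-- The relation is `f_S f_{T \ S} = f_T f_{S \ T}`, both sides being `f_{S ∪ T}`. -/
theorem exists_relation_shifts {p q t : ℕ} {S T : Finset ℚ} (hS : S.card = q + t)
    (hT : T.card = p + t) (h : t < (S ∩ T).card) :
    ∃ g : Fin p ⊕ Fin q → ℚ, g ≠ 0 ∧ ∑ x, g x • shifts p q S T x = 0 := by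
  have hST := Finset.card_sdiff_add_card_inter S T
  have hTS := Finset.card_sdiff_add_card_inter T S
  rw [Finset.inter_comm] at hTS
  have hU : rootPoly (T \ S) =
      ∑ s : Fin p, monomial (s : ℕ) ((rootPoly (T \ S)).coeff (s : ℕ)) := by
    rw [Fin.sum_univ_eq_sum_range (fun s => monomial s ((rootPoly (T \ S)).coeff s))]
    exact as_sum_range' _ _ (by rw [natDegree_rootPoly]; omega)
  have hV : rootPoly (S \ T) =
      ∑ s : Fin q, monomial (s : ℕ) ((rootPoly (S \ T)).coeff (s : ℕ)) := by
    rw [Fin.sum_univ_eq_sum_range (fun s => monomial s ((rootPoly (S \ T)).coeff s))]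
    exact as_sum_range' _ _ (by rw [natDegree_rootPoly]; omega)
  refine ⟨Sum.elim (fun s => (rootPoly (T \ S)).coeff s) (fun s => -(rootPoly (S \ T)).coeff s),
    fun h0 => (rootPoly_monic (T \ S)).ne_zero ?_, ?_⟩
  · rw [hU]
    exact Finset.sum_eq_zero fun s _ => by
      have := congrFun h0 (Sum.inl s)
      simp only [Sum.elim_inl, Pi.zero_apply] at this
      rw [this, map_zero]
  · rw [sum_smul_shifts]
    simp only [Sum.elim_inl, Sum.elim_inr, map_neg, Finset.sum_neg_distrib]
    rw [← hU, ← hV, mul_neg, rootPoly_mul_sdiff, rootPoly_mul_sdiff, Finset.union_comm,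
      add_neg_cancel]

/-- The two-column case: a matrix of rank at most `(p + q).choose p` that detects whether
`|A i ∩ B i'| > t` in the sense needed for triangularity. -/
theorem exists_pair_factorization {ι : Type*} [Fintype ι] {p q t : ℕ} (A B : ι → Finset ℚ)
    (hA : ∀ i, (A i).card = q + t) (hB : ∀ i, (B i).card = p + t)
    (hAB : ∀ i, (A i ∩ B i).card ≤ t) :
    ∃ u v : ι → Fin ((p + q).choose p) → ℚ, (∀ i, ∑ s, u i s * v i s ≠ 0) ∧
      ∀ i i', t < (A i ∩ B i').card → ∑ s, u i s * v i' s = 0 := by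
  obtain ⟨Q, hQ⟩ := exists_projection_det_ne_zero (fun i => shifts p q (A i) (B i))
    fun i => linearIndependent_shifts (hA i) (hB i) (hAB i)
  obtain ⟨φ, ψ, hdet⟩ := exists_laplace p q
  have hsum : ∀ i i', ∑ s, φ (fun s => Q (rootPoly (A i) * X ^ (s : ℕ))) s *
      ψ (fun s => Q (rootPoly (B i') * X ^ (s : ℕ))) s =
      (Matrix.of fun x => Q (shifts p q (A i) (B i') x)).det := by
    intro i i'
    rw [← hdet]
    congr 1
    ext (s | s) r <;> rfl
  refine ⟨fun i => φ fun s => Q (rootPoly (A i) * X ^ (s : ℕ)),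
    fun i => ψ fun s => Q (rootPoly (B i) * X ^ (s : ℕ)), fun i => ?_, fun i i' h => ?_⟩
  · rw [hsum]
    exact hQ i
  · rw [hsum]
    obtain ⟨g, hg0, hg⟩ := exists_relation_shifts (hA i) (hB i') h
    refine Matrix.exists_vecMul_eq_zero_iff.mp ⟨g, hg0, ?_⟩
    rw [Matrix.vecMul_eq_sum]
    have hQg := congrArg Q hg
    rw [map_sum, map_zero] at hQg
    simp only [map_smul] at hQg
    exact hQg

/-- The bound for sets of rationals of exact sizes `ℓ j`: the entrywise product of the matrices of
`exists_pair_factorization` over all pairs of columns is triangular. -/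
theorem le_prod_choose_s5 {k m t : ℕ} (ℓ : Fin k → ℕ) (hℓt : ∀ r, t ≤ ℓ r)
    (A : Fin m → Fin k → Finset ℚ) (hcard : ∀ i j, (A i j).card = ℓ j)
    (hthr : ∀ i, ∀ j j' : Fin k, j < j' → (A i j ∩ A i j').card ≤ t)
    (hcross : ∀ i i' : Fin m, i < i' →
      ∃ j j' : Fin k, j < j' ∧ t < (A i j ∩ A i' j').card) :
    m ≤ ∏ p ∈ Finset.univ.filter (fun p : Fin k × Fin k => p.1 < p.2),
      ((ℓ p.2 - t) + (ℓ p.1 - t)).choose (ℓ p.2 - t) := by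
  have hpair : ∀ e : {p : Fin k × Fin k // p.1 < p.2}, _ := fun e =>
    exists_pair_factorization (p := ℓ e.1.2 - t) (q := ℓ e.1.1 - t) (t := t)
      (fun i => A i e.1.1) (fun i => A i e.1.2)
      (fun i => by rw [hcard, Nat.sub_add_cancel (hℓt _)])
      (fun i => by rw [hcard, Nat.sub_add_cancel (hℓt _)])
      (fun i => hthr i _ _ e.2)
  choose u v hdiag hoff using hpair
  have hprod : ∀ i i',
      ∑ s : (∀ e : {p : Fin k × Fin k // p.1 < p.2},
        Fin (((ℓ e.1.2 - t) + (ℓ e.1.1 - t)).choose (ℓ e.1.2 - t))),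
        (∏ e, u e i (s e)) * (∏ e, v e i' (s e)) = ∏ e, ∑ s, u e i s * v e i' s := by
    intro i i'
    rw [Finset.prod_univ_sum, Fintype.piFinset_univ]
    exact Finset.sum_congr rfl fun s _ => Finset.prod_mul_distrib.symm
  have hle := le_card_of_triangular_factorization
    (fun i (s : ∀ e : {p : Fin k × Fin k // p.1 < p.2},
        Fin (((ℓ e.1.2 - t) + (ℓ e.1.1 - t)).choose (ℓ e.1.2 - t))) => ∏ e, u e i (s e))
    (fun i s => ∏ e, v e i (s e))
    (fun i => by
      rw [hprod]
      exact Finset.prod_ne_zero_iff.mpr fun e _ => hdiag e i)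
    (fun i i' hi => by
      rw [hprod]
      obtain ⟨j, j', hj, h⟩ := hcross i i' hi
      exact Finset.prod_eq_zero (Finset.mem_univ ⟨(j, j'), hj⟩) (hoff ⟨(j, j'), hj⟩ i i' h))
  rw [Fintype.card_pi] at hle
  simp only [Fintype.card_fin] at hle
  rwa [← Finset.prod_subtype_eq_prod_filter, Finset.subtype_univ]

/-- Sets can be enlarged to exact sizes `ℓ j`, inside `ℚ`, without changing intersections between
different columns: column `j` is padded with new elements `(j, s)`. Sets in the same column may
share padding. -/
theorem exists_padding_s5 {α : Type*} [DecidableEq α] {k m : ℕ} (ℓ : Fin k → ℕ)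
    (A : Fin m → Fin k → Finset α) (hcard : ∀ i j, (A i j).card ≤ ℓ j) :
    ∃ A' : Fin m → Fin k → Finset ℚ, (∀ i j, (A' i j).card = ℓ j) ∧
      ∀ i i' j j', j ≠ j' → (A' i j ∩ A' i' j').card = (A i j ∩ A i' j').card := by
  classical
  let U : Finset α := Finset.univ.biUnion fun x : Fin m × Fin k => A x.1 x.2
  have hU : ∀ i j, A i j ⊆ U := fun i j =>
    Finset.subset_biUnion_of_mem (fun x : Fin m × Fin k => A x.1 x.2) (Finset.mem_univ (i, j))
  obtain ⟨f, hf⟩ := exists_injective_nat (U ⊕ (Fin k × ℕ))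
  let e : (U ⊕ (Fin k × ℕ)) ↪ ℚ := ⟨fun x => (f x : ℚ), Nat.cast_injective.comp hf⟩
  let A₁ : Fin m → Fin k → Finset (U ⊕ (Fin k × ℕ)) := fun i j =>
    ((A i j).subtype (· ∈ U)).disjSum
      ((Finset.range (ℓ j - (A i j).card)).map ⟨fun s => (j, s), fun _ _ h => by simpa using h⟩)
  have hsub : ∀ S ⊆ U, (S.subtype (· ∈ U)).card = S.card := fun S hS => by
    rw [Finset.card_subtype, Finset.filter_true_of_mem hS]
  refine ⟨fun i j => (A₁ i j).map e, fun i j => ?_, fun i i' j j' hj => ?_⟩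
  · have := hcard i j
    simp only [Finset.card_map, A₁, Finset.card_disjSum, hsub _ (hU i j), Finset.card_range]
    omega
  · rw [← Finset.map_inter, Finset.card_map, ← hsub _ (Finset.inter_subset_left.trans (hU i j)),
      ← Finset.card_map (s := (A i j ∩ A i' j').subtype (· ∈ U))
        (Function.Embedding.inl (β := Fin k × ℕ))]
    refine congrArg Finset.card ?_
    ext (x | ⟨a, s⟩)
    · simp [A₁]
    · simp [A₁]
      intro _ _ h _ _ h'
      exact hj ((congrArg Prod.fst h).trans (congrArg Prod.fst h').symm)

theorem prod_factorial_eq {k t : ℕ} (ℓ : Fin k → ℕ) (hℓt : ∀ r, t ≤ ℓ r) :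
    ∏ p ∈ Finset.univ.filter (fun p : Fin k × Fin k => p.1 < p.2),
        (ℓ p.1 + ℓ p.2 - 2 * t).factorial =
      (∏ p ∈ Finset.univ.filter (fun p : Fin k × Fin k => p.1 < p.2),
        ((ℓ p.2 - t) + (ℓ p.1 - t)).choose (ℓ p.2 - t)) *
      (∏ r, (ℓ r - t).factorial) ^ (k - 1) := by
  have hden : (∏ r, (ℓ r - t).factorial) ^ (k - 1) =
      ∏ p ∈ Finset.univ.filter (fun p : Fin k × Fin k => p.1 < p.2),
        (ℓ p.2 - t).factorial * (ℓ p.1 - t).factorial := by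
    have h := Finset.prod_prod_Ioi_mul_eq_prod_prod_off_diag
      (fun _ i : Fin k => (ℓ i - t).factorial)
    simp only [Finset.prod_const, Finset.card_compl, Finset.card_singleton,
      Fintype.card_fin] at h
    rw [← Finset.prod_pow, ← h, Finset.prod_filter, ← Finset.univ_product_univ,
      Finset.prod_product]
    refine Finset.prod_congr rfl fun i _ => ?_
    rw [← Finset.prod_filter]
    refine Finset.prod_congr (by ext; simp) fun j _ => mul_comm _ _
  rw [hden, ← Finset.prod_mul_distrib]
  refine Finset.prod_congr rfl fun p _ => ?_
  have h1 := hℓt p.1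
  have h2 := hℓt p.2
  rw [← mul_assoc, Nat.choose_symm_add,
    Nat.add_choose_mul_factorial_mul_factorial]
  congr 1
  omega

/-- Threshold version of the second remedy, for finite sets. -/
theorem einstein_sets_threshold {α : Type*} [DecidableEq α]
    (k m t : ℕ) (ℓ : Fin k → ℕ) (hℓ : ∀ r, 0 < ℓ r) (hℓt : ∀ r, t ≤ ℓ r)
    (A : Fin m → Fin k → Finset α)
    (hcard : ∀ i j, (A i j).card ≤ ℓ j)
    (hthr : ∀ i, ∀ j j' : Fin k, j ≠ j' → (A i j ∩ A i j').card ≤ t)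
    (hcross : ∀ i i' : Fin m, i < i' →
      ∃ j j' : Fin k, j < j' ∧ t < (A i j ∩ A i' j').card) :
    m ≤ (∏ p ∈ Finset.univ.filter (fun p : Fin k × Fin k => p.1 < p.2),
          (ℓ p.1 + ℓ p.2 - 2 * t).factorial) /
        (∏ r, (ℓ r - t).factorial) ^ (k - 1) := by
  obtain ⟨A', hcard', hinter⟩ := exists_padding_s5 ℓ A hcard
  rw [prod_factorial_eq ℓ hℓt, Nat.mul_div_cancel _
    (pow_pos (Finset.prod_pos fun r _ => Nat.factorial_pos _) _)]
  refine le_prod_choose_s5 ℓ hℓt A' hcard' (fun i j j' hj => ?_) fun i i' hi => ?_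
  · rw [hinter i i j j' hj.ne]
    exact hthr i j j' hj.ne
  · obtain ⟨j, j', hj, h⟩ := hcross i i' hi
    exact ⟨j, j', hj, by rwa [hinter i i' j j' hj.ne]⟩
end
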